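/- arXiv:2303.13304 — 2 statements merged into one kernel-verified Lean document; each statement's English description precedes it below -/
import Mathlib

section
/- For every generalized Pauli matrix X^s Z^t on ℂ^d there exists a unitary matrix W and a complex number c with |c| = 1 such that W (X^s Z^t) W† = c · Z^{gcd(s, t, d)}. -/
open Matrix

/-- The primitive `d`-th root of unity `ω = e^{2πi/d}`. -/
noncomputable def omega (d : ℕ) : ℂ := Complex.exp (2 * Real.pi * Complex.I / d)

/-- The power `X^s` (for any integer `s`) of the shift matrix `X` on `ℂ^d`,
`X|j⟩ = |j+1 mod d⟩`; its `(i,j)` entry is `1` iff `i ≡ j + s (mod d)`. -/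
def Xpow (d : ℕ) (s : ℤ) : Matrix (Fin d) (Fin d) ℂ :=
  Matrix.of fun i j => if (i : ℤ) = (((j : ℕ) : ℤ) + s) % (d : ℤ) then (1 : ℂ) else 0

/-- The power `Z^t` (for any integer `t`) of the clock matrix `Z` on `ℂ^d`,
`Z|j⟩ = ω^j |j⟩`; it is diagonal with entries `ω^{t·j} = e^{2πi·t·j/d}`. -/
noncomputable def Zpow (d : ℕ) (t : ℤ) : Matrix (Fin d) (Fin d) ℂ :=
  Matrix.diagonal fun j => Complex.exp (2 * Real.pi * Complex.I * (t : ℂ) * ((j : ℕ) : ℂ) / (d : ℂ))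

/-- The generalized Pauli matrix `X^s Z^t` on `ℂ^d`. -/
noncomputable def GPM (d : ℕ) (s t : ℤ) : Matrix (Fin d) (Fin d) ℂ :=
  Xpow d s * Zpow d t

/-- `A ≈ B` : equality up to a unimodular (global phase) scalar. -/
def PhaseEq {n : Type*} (A B : Matrix n n ℂ) : Prop :=
  ∃ c : ℂ, ‖c‖ = 1 ∧ A = c • B

/-- `A` is unitarily conjugate to `B` up to a unimodular scalar. -/
def UnitaryConjPhase {n : Type*} [Fintype n] [DecidableEq n] (A B : Matrix n n ℂ) : Prop :=
  ∃ W ∈ Matrix.unitaryGroup n ℂ, ∃ c : ℂ, ‖c‖ = 1 ∧ W * A * Wᴴ = c • B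

namespace UnitaryConjPhase

variable {n : Type*} [Fintype n] [DecidableEq n] {A B C : Matrix n n ℂ}

theorem refl (A : Matrix n n ℂ) : UnitaryConjPhase A A :=
  ⟨1, one_mem _, 1, by simp, by simp⟩

theorem trans (hAB : UnitaryConjPhase A B) (hBC : UnitaryConjPhase B C) :
    UnitaryConjPhase A C := by
  obtain ⟨V, hV, c, hc, hVc⟩ := hAB
  obtain ⟨W, hW, e, he, hWe⟩ := hBC
  refine ⟨W * V, mul_mem hW hV, c * e, by simp [hc, he], ?_⟩
  calc W * V * A * (W * V)ᴴ = W * (V * A * Vᴴ) * Wᴴ := by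
        simp only [Matrix.conjTranspose_mul, Matrix.mul_assoc]
    _ = (c * e) • C := by
        rw [hVc, Matrix.mul_smul, Matrix.smul_mul, hWe, smul_smul]

theorem of_intertwine {W : Matrix n n ℂ} (hW : W ∈ Matrix.unitaryGroup n ℂ) {c : ℂ}
    (hc : ‖c‖ = 1) (h : W * A = c • (B * W)) : UnitaryConjPhase A B := by
  refine ⟨W, hW, c, hc, ?_⟩
  have hWW : W * Wᴴ = 1 := Matrix.mem_unitaryGroup_iff.1 hW
  rw [h, Matrix.smul_mul, Matrix.mul_assoc, hWW, Matrix.mul_one]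

end UnitaryConjPhase

section GeneralizedPauli

variable {d : ℕ}

theorem omega_ne_zero : omega d ≠ 0 := Complex.exp_ne_zero _

theorem Zpow_eq (t : ℤ) : Zpow d t = Matrix.diagonal fun j : Fin d => omega d ^ (t * (j : ℕ)) := by
  unfold Zpow omega
  congr 1
  funext j
  rw [← Complex.exp_int_mul]
  congr 1
  push_cast
  ring

theorem GPM_zero_left (t : ℤ) : GPM d 0 t = Zpow d t := by
  have h : Xpow d 0 = 1 := by
    ext i j
    rw [Xpow, Matrix.of_apply, Matrix.one_apply, add_zero, Int.emod_eq_of_lt (by omega) (by omega)]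
    simp [Fin.val_inj]
  rw [GPM, h, Matrix.one_mul]

theorem GPM_self_left (t : ℤ) : GPM d d t = GPM d 0 t := by
  simp [GPM, Xpow]

variable [NeZero d]

theorem isPrimitiveRoot_omega : IsPrimitiveRoot (omega d) d :=
  Complex.isPrimitiveRoot_exp d (NeZero.ne d)

theorem norm_omega : ‖omega d‖ = 1 :=
  isPrimitiveRoot_omega.norm'_eq_one (NeZero.ne d)

theorem conj_omega : star (omega d) = (omega d)⁻¹ :=
  (Complex.inv_eq_conj norm_omega).symm

theorem omega_zpow_eq_of_dvd {x y : ℤ} (h : (d : ℤ) ∣ x - y) : omega d ^ x = omega d ^ y := by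
  have h1 := (isPrimitiveRoot_omega (d := d)).zpow_eq_one_iff_dvd (x - y) |>.2 h
  rw [zpow_sub₀ omega_ne_zero] at h1
  exact (div_eq_one_iff_eq (zpow_ne_zero _ omega_ne_zero)).1 h1

theorem sum_omega_zpow (x : ℤ) :
    ∑ j : Fin d, omega d ^ (x * (j : ℕ)) = if (d : ℤ) ∣ x then (d : ℂ) else 0 := by
  simp only [_root_.zpow_mul, zpow_natCast]
  rw [← Finset.sum_range (fun j => (omega d ^ x) ^ j)]
  have h := (isPrimitiveRoot_omega (d := d)).zpow_eq_one_iff_dvd x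
  split_ifs with hx
  · simp [h.2 hx]
  · rw [geom_sum_eq (mt h.1 hx), ← zpow_natCast, ← _root_.zpow_mul, mul_comm, _root_.zpow_mul, zpow_natCast,
      isPrimitiveRoot_omega.pow_eq_one]
    simp

/-- The residue of an integer modulo `d`, as an element of `Fin d`. -/
def residue (d : ℕ) [NeZero d] (x : ℤ) : Fin d :=
  ⟨(x % d).toNat, by
    have := Int.emod_nonneg x (b := d) (by simp [NeZero.ne d])
    have := Int.emod_lt_of_pos x (b := d) (by simp [NeZero.pos d])
    omega⟩

theorem coe_residue (x : ℤ) : ((residue d x : ℕ) : ℤ) = x % d :=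
  Int.toNat_of_nonneg (Int.emod_nonneg x (by simp [NeZero.ne d]))

theorem dvd_residue_sub (x : ℤ) : (d : ℤ) ∣ (residue d x : ℕ) - x := by
  rw [coe_residue]
  exact (Int.mod_modEq x d).symm.dvd

theorem coe_eq_emod_iff (i : Fin d) (x : ℤ) : ((i : ℕ) : ℤ) = x % d ↔ i = residue d x := by
  rw [← coe_residue, Nat.cast_inj, Fin.val_inj]

theorem eq_residue_add_iff (i j : Fin d) (s : ℤ) :
    i = residue d ((j : ℕ) + s) ↔ j = residue d ((i : ℕ) - s) := by
  have key (i j : Fin d) (s : ℤ) (h : i = residue d ((j : ℕ) + s)) :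
      j = residue d ((i : ℕ) - s) := by
    rw [← coe_eq_emod_iff] at h ⊢
    rw [h, Int.emod_sub_emod, add_sub_cancel_right, Int.emod_eq_of_lt] <;> have := j.2 <;> omega
  refine ⟨key i j s, fun h => ?_⟩
  simpa using key j i (-s) (by simpa [sub_eq_add_neg] using h)

theorem mul_GPM_apply (M : Matrix (Fin d) (Fin d) ℂ) (s t : ℤ) (i k : Fin d) :
    (M * GPM d s t) i k = M i (residue d ((k : ℕ) + s)) * omega d ^ (t * (k : ℕ)) := by
  rw [GPM, Zpow_eq, ← Matrix.mul_assoc, Matrix.mul_diagonal, Matrix.mul_apply]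
  simp [Xpow, coe_eq_emod_iff]

theorem GPM_mul_apply (M : Matrix (Fin d) (Fin d) ℂ) (s t : ℤ) (i k : Fin d) :
    (GPM d s t * M) i k =
      omega d ^ (t * (residue d ((i : ℕ) - s) : ℕ)) * M (residue d ((i : ℕ) - s)) k := by
  rw [GPM, Zpow_eq, Matrix.mul_assoc, Matrix.mul_apply]
  simp [Xpow, coe_eq_emod_iff, eq_residue_add_iff, Matrix.diagonal_mul]

/-- The discrete Fourier transform. -/
noncomputable def fourierMatrix (d : ℕ) : Matrix (Fin d) (Fin d) ℂ :=
  Matrix.of fun i j => ((Real.sqrt d : ℝ) : ℂ)⁻¹ * omega d ^ (((i : ℕ) : ℤ) * (j : ℕ))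

theorem fourierMatrix_mem_unitaryGroup : fourierMatrix d ∈ Matrix.unitaryGroup (Fin d) ℂ := by
  rw [Matrix.mem_unitaryGroup_iff]
  ext i k
  have hsq : ((Real.sqrt d : ℝ) : ℂ)⁻¹ * ((Real.sqrt d : ℝ) : ℂ)⁻¹ = (d : ℂ)⁻¹ := by
    rw [← mul_inv, ← Complex.ofReal_mul, Real.mul_self_sqrt (Nat.cast_nonneg d)]
    simp
  have hterm (j : Fin d) : fourierMatrix d i j * star (fourierMatrix d) j k =
      (d : ℂ)⁻¹ * omega d ^ ((((i : ℕ) : ℤ) - (k : ℕ)) * (j : ℕ)) := by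
    rw [Matrix.star_apply, fourierMatrix, Matrix.of_apply, Matrix.of_apply, star_mul, star_zpow₀,
      conj_omega, _root_.inv_zpow, star_inv₀, sub_mul, zpow_sub₀ omega_ne_zero, ← hsq]
    simp
    ring
  rw [Matrix.mul_apply, Finset.sum_congr rfl fun j _ => hterm j, ← Finset.mul_sum, sum_omega_zpow,
    Matrix.one_apply]
  have hdvd : (d : ℤ) ∣ ((i : ℕ) : ℤ) - (k : ℕ) ↔ i = k := by
    rw [← Int.modEq_iff_dvd, Int.natCast_modEq_iff, Nat.ModEq, Nat.mod_eq_of_lt i.2,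
      Nat.mod_eq_of_lt k.2, Fin.val_inj, eq_comm]
  simp [hdvd, NeZero.ne d]

theorem GPM_conj_fourier (s t : ℤ) : UnitaryConjPhase (GPM d s t) (GPM d (-t) s) := by
  refine .of_intertwine fourierMatrix_mem_unitaryGroup (c := omega d ^ (-(s * t)))
    (by rw [norm_zpow, norm_omega, _root_.one_zpow]) ?_
  ext i k
  rw [Matrix.smul_apply, mul_GPM_apply, GPM_mul_apply, fourierMatrix, Matrix.of_apply,
    Matrix.of_apply, smul_eq_mul, mul_assoc, ← zpow_add₀ omega_ne_zero,
    mul_left_comm (omega d ^ (s * _)), mul_left_comm (omega d ^ (-(s * t))),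
    ← zpow_add₀ omega_ne_zero, ← zpow_add₀ omega_ne_zero]
  congr 1
  apply omega_zpow_eq_of_dvd
  obtain ⟨a, ha⟩ := dvd_residue_sub (d := d) ((k : ℕ) + s)
  obtain ⟨b, hb⟩ := dvd_residue_sub (d := d) ((i : ℕ) - -t)
  rw [sub_eq_iff_eq_add.1 ha, sub_eq_iff_eq_add.1 hb]
  exact ⟨(i : ℕ) * a - s * b - b * (k : ℕ), by ring⟩

/-- The `d`-periodic quadratic phase `e^{πi x(x+d)/d}`. -/
noncomputable def quadPhase (d : ℕ) (x : ℤ) : ℂ :=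
  omega (2 * d) ^ (x * (x + d))

theorem omega_two_mul_sq : omega (2 * d) ^ (2 : ℤ) = omega d := by
  rw [omega, omega, ← Complex.exp_int_mul]
  congr 1
  have := NeZero.ne d
  push_cast
  field_simp

theorem norm_quadPhase (x : ℤ) : ‖quadPhase d x‖ = 1 := by
  rw [quadPhase, norm_zpow, norm_omega, _root_.one_zpow]

theorem quadPhase_residue (x : ℤ) : quadPhase d (residue d x : ℕ) = quadPhase d x := by
  obtain ⟨a, ha⟩ := dvd_residue_sub (d := d) x
  rw [sub_eq_iff_eq_add.1 ha]
  obtain ⟨b, hb⟩ := (Int.even_mul_succ_self a).two_dvd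
  refine omega_zpow_eq_of_dvd ⟨x * a + d * b, ?_⟩
  push_cast
  linear_combination (d : ℤ) ^ 2 * hb

theorem quadPhase_add (x y : ℤ) :
    quadPhase d (x + y) = quadPhase d y * omega d ^ (y * x) * quadPhase d x := by
  rw [← omega_two_mul_sq, ← _root_.zpow_mul, quadPhase, quadPhase, quadPhase, ← zpow_add₀ omega_ne_zero,
    ← zpow_add₀ omega_ne_zero]
  congr 1
  ring

theorem GPM_conj_shear (s t m : ℤ) : UnitaryConjPhase (GPM d s t) (GPM d s (t + m * s)) := by
  have hnorm (x : ℤ) : ‖quadPhase d x ^ m‖ = 1 := by rw [norm_zpow, norm_quadPhase, _root_.one_zpow]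
  refine .of_intertwine (W := Matrix.diagonal fun j : Fin d => quadPhase d (j : ℕ) ^ m) ?_
    (hnorm s) ?_
  · rw [Matrix.mem_unitaryGroup_iff, Matrix.star_eq_conjTranspose, Matrix.diagonal_conjTranspose,
      Matrix.diagonal_mul_diagonal, ← Matrix.diagonal_one]
    congr 1
    funext j
    rw [Pi.star_apply, Complex.star_def, Complex.mul_conj', hnorm]
    simp
  · ext i k
    rw [Matrix.smul_apply, mul_GPM_apply, GPM_mul_apply, smul_eq_mul, Matrix.diagonal_apply,
      Matrix.diagonal_apply]
    by_cases h : i = residue d ((k : ℕ) + s)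
    · rw [if_pos h, if_pos ((eq_residue_add_iff i k s).1 h).symm, ← (eq_residue_add_iff i k s).1 h,
        h, quadPhase_residue, quadPhase_add, _root_.mul_zpow, _root_.mul_zpow, ← _root_.zpow_mul, add_mul,
        zpow_add₀ omega_ne_zero]
      ring_nf
    · rw [if_neg h, if_neg fun h' => h ((eq_residue_add_iff i k s).2 h'.symm)]
      simp

theorem GPM_conj_gcd (s t : ℤ) : UnitaryConjPhase (GPM d s t) (GPM d 0 (Int.gcd s t)) := by
  induction h : s.natAbs using Nat.strong_induction_on generalizing s t with
  | _ n ih =>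
    subst h
    rcases eq_or_ne s 0 with rfl | hs
    · rw [Int.gcd_zero_left]
      rcases Int.natAbs_eq t with ht | ht
      · rw [← ht]
        exact .refl _
      · have h := (GPM_conj_fourier (d := d) 0 t).trans (GPM_conj_fourier (-t) 0)
        rwa [neg_zero, show -t = t.natAbs by omega] at h
    · have hlt : (-(t % s)).natAbs < s.natAbs := by
        have := Int.emod_nonneg t hs
        have := Int.emod_lt_abs t hs
        rw [Int.abs_eq_natAbs] at this
        omega
      have hshear := GPM_conj_shear (d := d) s t (-(t / s))
      rw [show t + -(t / s) * s = t % s by rw [Int.emod_def]; ring] at hshear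
      have h := (hshear.trans (GPM_conj_fourier s (t % s))).trans (ih _ hlt _ _ rfl)
      rwa [Int.neg_gcd, Int.gcd_comm, Int.emod_def, Int.gcd_sub_mul_left_right] at h

end GeneralizedPauli

/-- Every GPM `X^s Z^t` on `ℂ^d` is unitarily conjugate, up to a global
phase, to `Z^{gcd(s,t,d)}`. -/
theorem gpm_conj_to_Z_gcd (d : ℕ) (hd : 2 ≤ d) (s t : ℤ) :
    ∃ W ∈ Matrix.unitaryGroup (Fin d) ℂ, ∃ c : ℂ, ‖c‖ = 1 ∧
      W * GPM d s t * Wᴴ = c • Zpow d (Int.gcd s (Int.gcd t (d : ℤ) : ℤ) : ℤ) := by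
  have : NeZero d := ⟨by omega⟩
  have h := GPM_conj_gcd (d := d) s t
  rw [← GPM_self_left] at h
  have h' := h.trans (GPM_conj_gcd d (Int.gcd s t))
  rwa [GPM_zero_left, Int.gcd_comm, Int.gcd_assoc] at h'
end

section
/- Let b be a positive divisor of d, let n ≥ 2, and let s₂, …, s_n, t₂, …, t_n be integers with b dividing t_i for every i = 2, …, n. Put a = gcd(s₂, …, s_n, d). Then a unitary matrix U on ℂ^d is a local Clifford operator on the set {I, Z^b, X^{s₂}Z^{t₂}, …, X^{s_n}Z^{t_n}} (i.e. U conjugates each member of the set to a unimodular scalar multiple of some GPM) if and only if U is a local Clifford operator on the pair {X^a, Z^b} (i.e. U X^a U† and U Z^b U† are each unimodular scalar multiples of some GPM). -/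
open Matrix

/-- `A` is a unimodular scalar multiple of some generalized Pauli matrix on `ℂ^d`. -/
def GPMScalar (d : ℕ) (A : Matrix (Fin d) (Fin d) ℂ) : Prop :=
  ∃ (c : ℂ) (m n : ℤ), ‖c‖ = 1 ∧ A = c • GPM d m n

lemma Xpow_add (d : ℕ) (s s' : ℤ) : Xpow d (s + s') = Xpow d s * Xpow d s' := by
  ext i j
  have hd : (0 : ℤ) < d := by have := i.pos; omega
  obtain ⟨r, hr⟩ : ∃ r : Fin d, (r : ℤ) = ((j : ℕ) + s' : ℤ) % d := by
    refine ⟨⟨(((j : ℕ) + s' : ℤ) % d).toNat, ?_⟩, ?_⟩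
    · have := Int.emod_lt_of_pos ((j : ℕ) + s' : ℤ) hd
      omega
    · exact Int.toNat_of_nonneg (Int.emod_nonneg _ hd.ne')
  have hiff (x : Fin d) : (x : ℤ) = ((j : ℕ) + s' : ℤ) % d ↔ x = r := by
    rw [← hr, Fin.ext_iff]; exact Nat.cast_inj
  simp only [Xpow, Matrix.mul_apply, Matrix.of_apply, hiff, mul_ite, mul_one, mul_zero,
    Finset.sum_ite_eq', Finset.mem_univ, if_true]
  rw [hr, Int.emod_add_emod, add_assoc, add_comm s s']

lemma Xpow_dim (d : ℕ) : Xpow d d = 1 := by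
  ext i j
  have : ((j : ℕ) : ℤ) % d = (j : ℕ) := Int.emod_eq_of_lt (by positivity) (by exact_mod_cast j.2)
  simp only [Xpow, Matrix.of_apply, Int.add_emod_right, this, Matrix.one_apply, Fin.ext_iff,
    Nat.cast_inj]

lemma Xpow_zero (d : ℕ) : Xpow d 0 = 1 := by
  simpa [Xpow_dim] using (Xpow_add d 0 d).symm

lemma Xpow_conjTranspose (d : ℕ) (s : ℤ) : (Xpow d s)ᴴ = Xpow d (-s) := by
  ext i j
  have hi : ((i : ℕ) : ℤ) % d = (i : ℕ) := Int.emod_eq_of_lt (by positivity) (by exact_mod_cast i.2)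
  have hj : ((j : ℕ) : ℤ) % d = (j : ℕ) := Int.emod_eq_of_lt (by positivity) (by exact_mod_cast j.2)
  have h : ((j : ℕ) : ℤ) = ((i : ℕ) + s) % d ↔ ((i : ℕ) : ℤ) = ((j : ℕ) + -s) % d := by
    conv_lhs => rw [← hj]
    conv_rhs => rw [← hi]
    rw [Int.emod_eq_emod_iff_emod_sub_eq_zero, Int.emod_eq_emod_iff_emod_sub_eq_zero,
      ← Int.dvd_iff_emod_eq_zero, ← Int.dvd_iff_emod_eq_zero, ← dvd_neg]
    ring_nf
  simp only [Xpow, Matrix.conjTranspose_apply, Matrix.of_apply, h]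
  split_ifs <;> simp

lemma Zpow_add (d : ℕ) (t t' : ℤ) : Zpow d (t + t') = Zpow d t * Zpow d t' := by
  simp only [Zpow, Matrix.diagonal_mul_diagonal, ← Complex.exp_add]
  congr 1
  ext j
  push_cast
  ring_nf

lemma Zpow_zero (d : ℕ) : Zpow d 0 = 1 := by
  simp [Zpow]

lemma Zpow_conjTranspose (d : ℕ) (t : ℤ) : (Zpow d t)ᴴ = Zpow d (-t) := by
  simp only [Zpow, Matrix.diagonal_conjTranspose]
  congr 1
  ext j
  simp [← Complex.exp_conj, Complex.conj_ofNat]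

/-- The commutation relation `Z^t X^s = ω^{ts} X^s Z^t`. -/
lemma Zpow_mul_Xpow (d : ℕ) (s t : ℤ) :
    ∃ c : ℂ, ‖c‖ = 1 ∧ Zpow d t * Xpow d s = c • (Xpow d s * Zpow d t) := by
  refine ⟨Complex.exp ((2 * Real.pi * t * s / d : ℝ) * Complex.I),
    Complex.norm_exp_ofReal_mul_I _, ?_⟩
  ext i j
  simp only [Zpow, Xpow, Matrix.diagonal_mul, Matrix.mul_diagonal, Matrix.smul_apply,
    Matrix.of_apply, smul_eq_mul, mul_ite, ite_mul, mul_one, one_mul, mul_zero, zero_mul]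
  split_ifs with h
  · have hd : (d : ℂ) ≠ 0 := by exact_mod_cast i.pos.ne'
    have hi : ((i : ℕ) : ℂ) = (j : ℕ) + s - d * ((((j : ℕ) + s : ℤ) / d : ℤ) : ℂ) := by
      rw [Int.emod_def] at h
      exact_mod_cast congrArg (Int.cast (R := ℂ)) h
    rw [← Complex.exp_add, Complex.exp_eq_exp_iff_exists_int]
    refine ⟨-(t * (((j : ℕ) + s : ℤ) / d)), ?_⟩
    rw [hi]
    push_cast
    field_simp
    ring
  · rfl

namespace GPMScalar

variable {d : ℕ} {A B U : Matrix (Fin d) (Fin d) ℂ}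

lemma one : GPMScalar d 1 :=
  ⟨1, 0, 0, by simp, by simp [GPM, Xpow_zero, Zpow_zero]⟩

lemma mul (hA : GPMScalar d A) (hB : GPMScalar d B) : GPMScalar d (A * B) := by
  obtain ⟨c, m, n, hc, rfl⟩ := hA
  obtain ⟨c', m', n', hc', rfl⟩ := hB
  obtain ⟨w, hw, h⟩ := Zpow_mul_Xpow d m' n
  refine ⟨c * c' * w, m + m', n + n', by simp [hc, hc', hw], ?_⟩
  have : GPM d m n * GPM d m' n' = w • GPM d (m + m') (n + n') := by
    simp only [GPM, Xpow_add, Zpow_add]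
    rw [Matrix.mul_assoc, ← Matrix.mul_assoc (Zpow d n), h]
    simp [Matrix.mul_assoc]
  rw [Matrix.smul_mul, Matrix.mul_smul, this, smul_smul, smul_smul, mul_assoc]

lemma conjTranspose (hA : GPMScalar d A) : GPMScalar d Aᴴ := by
  obtain ⟨c, m, n, hc, rfl⟩ := hA
  obtain ⟨w, hw, h⟩ := Zpow_mul_Xpow d (-m) (-n)
  refine ⟨star c * w, -m, -n, by simp [hc, hw], ?_⟩
  rw [Matrix.conjTranspose_smul, GPM, Matrix.conjTranspose_mul, Xpow_conjTranspose,
    Zpow_conjTranspose, h, smul_smul, GPM]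

lemma conj_one (hU : U ∈ Matrix.unitaryGroup (Fin d) ℂ) : GPMScalar d (U * 1 * Uᴴ) := by
  rw [Matrix.mul_one, ← Matrix.star_eq_conjTranspose, Matrix.mem_unitaryGroup_iff.mp hU]
  exact one

lemma conj_mul (hU : U ∈ Matrix.unitaryGroup (Fin d) ℂ) (hA : GPMScalar d (U * A * Uᴴ))
    (hB : GPMScalar d (U * B * Uᴴ)) : GPMScalar d (U * (A * B) * Uᴴ) := by
  have h : Uᴴ * U = 1 := Matrix.mem_unitaryGroup_iff'.mp hU
  have : U * (A * B) * Uᴴ = U * A * Uᴴ * (U * B * Uᴴ) := by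
    calc U * (A * B) * Uᴴ = U * A * 1 * B * Uᴴ := by simp only [Matrix.mul_assoc, Matrix.one_mul]
      _ = U * A * Uᴴ * (U * B * Uᴴ) := by rw [← h]; simp only [Matrix.mul_assoc]
  rw [this]
  exact hA.mul hB

lemma conj_conjTranspose (hA : GPMScalar d (U * A * Uᴴ)) : GPMScalar d (U * Aᴴ * Uᴴ) := by
  simpa [Matrix.conjTranspose_mul, Matrix.mul_assoc] using hA.conjTranspose

end GPMScalar

/-- The exponents `s` for which the unitary `U` conjugates `X^s` to a phased GPM. -/
def cliffordXExponents {d : ℕ} {U : Matrix (Fin d) (Fin d) ℂ}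
    (hU : U ∈ Matrix.unitaryGroup (Fin d) ℂ) : AddSubgroup ℤ where
  carrier := {s | GPMScalar d (U * Xpow d s * Uᴴ)}
  zero_mem' := by simpa only [Set.mem_ofPred_eq, Xpow_zero] using GPMScalar.conj_one hU
  add_mem' {s s'} hs hs' := by
    simpa only [Set.mem_ofPred_eq, Xpow_add] using GPMScalar.conj_mul hU hs hs'
  neg_mem' {s} hs := by
    simpa only [Set.mem_ofPred_eq, Xpow_conjTranspose] using GPMScalar.conj_conjTranspose hs

/-- The exponents `t` for which the unitary `U` conjugates `Z^t` to a phased GPM. -/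
def cliffordZExponents {d : ℕ} {U : Matrix (Fin d) (Fin d) ℂ}
    (hU : U ∈ Matrix.unitaryGroup (Fin d) ℂ) : AddSubgroup ℤ where
  carrier := {t | GPMScalar d (U * Zpow d t * Uᴴ)}
  zero_mem' := by simpa only [Set.mem_ofPred_eq, Zpow_zero] using GPMScalar.conj_one hU
  add_mem' {t t'} ht ht' := by
    simpa only [Set.mem_ofPred_eq, Zpow_add] using GPMScalar.conj_mul hU ht ht'
  neg_mem' {t} ht := by
    simpa only [Set.mem_ofPred_eq, Zpow_conjTranspose] using GPMScalar.conj_conjTranspose ht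

lemma AddSubgroup.mem_of_dvd_int {H : AddSubgroup ℤ} {a x : ℤ} (ha : a ∈ H) (h : a ∣ x) :
    x ∈ H := by
  obtain ⟨c, rfl⟩ := h
  simpa [mul_comm] using H.zsmul_mem ha c

lemma AddSubgroup.int_gcd_mem_iff {ι : Type*} (H : AddSubgroup ℤ) (S : Finset ι) (s : ι → ℤ)
    {d : ℤ} (hd : d ∈ H) : ((Int.gcd (S.gcd s) d : ℕ) : ℤ) ∈ H ↔ ∀ i ∈ S, s i ∈ H := by
  refine ⟨fun h i hi => AddSubgroup.mem_of_dvd_int h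
    ((Int.gcd_dvd_left _ _).trans (Finset.gcd_dvd hi)), fun h => ?_⟩
  obtain ⟨g, rfl⟩ := Int.subgroup_cyclic H
  simp only [← AddSubgroup.zmultiples_eq_closure, Int.mem_zmultiples_iff] at h hd ⊢
  exact Int.dvd_coe_gcd (Finset.dvd_gcd h) hd

/-- **Lemma 4.1.** Let `b ∣ d` be positive and let `X^{s_i} Z^{t_i}`
(`i = 2, …, n`, here indexed by `Fin k` with `k = n - 1 ≥ 1`) satisfy `b ∣ t_i`; put
`a = gcd(s₂, …, s_n, d)`. A unitary `U` is a local Clifford operator on the set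
`{I, Z^b, X^{s₂}Z^{t₂}, …, X^{s_n}Z^{t_n}}` iff it is a local Clifford operator on
the pair `{X^a, Z^b}`. -/
theorem local_clifford_iff (d : ℕ) (hd : 2 ≤ d) (b : ℕ) (hb0 : 0 < b) (hb : b ∣ d)
    (k : ℕ) (hk : 1 ≤ k) (s t : Fin k → ℤ) (hbt : ∀ i, (b : ℤ) ∣ t i)
    (U : Matrix (Fin d) (Fin d) ℂ) (hU : U ∈ Matrix.unitaryGroup (Fin d) ℂ) :
    (GPMScalar d (U * 1 * Uᴴ) ∧ GPMScalar d (U * Zpow d (b : ℤ) * Uᴴ) ∧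
      ∀ i, GPMScalar d (U * GPM d (s i) (t i) * Uᴴ)) ↔
    (GPMScalar d (U * Xpow d ((Int.gcd (Finset.univ.gcd s) (d : ℤ) : ℕ) : ℤ) * Uᴴ) ∧
      GPMScalar d (U * Zpow d (b : ℤ) * Uᴴ)) := by
  have hd_mem : (d : ℤ) ∈ cliffordXExponents hU := by
    change GPMScalar d (U * Xpow d d * Uᴴ)
    rw [Xpow_dim]
    exact GPMScalar.conj_one hU
  have hgcd := AddSubgroup.int_gcd_mem_iff (cliffordXExponents hU) Finset.univ s hd_mem
  constructor
  · rintro ⟨-, hZ, hXZ⟩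
    refine ⟨hgcd.mpr fun i _ => ?_, hZ⟩
    have hneg : -t i ∈ cliffordZExponents hU := neg_mem (AddSubgroup.mem_of_dvd_int hZ (hbt i))
    have h := GPMScalar.conj_mul hU (hXZ i) hneg
    rwa [GPM, Matrix.mul_assoc (Xpow d _), ← Zpow_add, add_neg_cancel, Zpow_zero, Matrix.mul_one] at h
  · rintro ⟨hX, hZ⟩
    exact ⟨GPMScalar.conj_one hU, hZ, fun i => GPMScalar.conj_mul hU
      (hgcd.mp hX i (Finset.mem_univ i))
      (AddSubgroup.mem_of_dvd_int (H := cliffordZExponents hU) hZ (hbt i))⟩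
end
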